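/- Theorem 3.4 (theories with δL/δ∂φ proportional to the gradient of δL/δφ): let L be a Lagrangian density and ρ ∈ ℝ a constant such that for EVERY smooth field ψ (solution or not), every x, and every μ: Σ_ν η μ ν · L_{p_ν}(jψ x) = ρ · ∂_μ (fun y ↦ L_u(jψ y)) x. Let φ be a smooth solution of the Euler–Lagrange equation for L. Then for each fixed ν, the current K^μ_ν x := L_{p_μ}(jφ x) · (Σ_α η ν α · L_{p_α}(jφ x)) − (1/2)·(if μ = ν then ρ·(L_u(jφ x))² + Σ_{α,β} η α β · L_{p_α}(jφ x) · L_{p_β}(jφ x) else 0) is conserved: Σ_μ ∂_μ (fun y ↦ K^μ_ν y) x = 0 for all x. -/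

import Mathlib

open scoped BigOperators

noncomputable section

/-- Minkowski metric on `Fin D`. -/
def eta (D : ℕ) (μ ν : Fin D) : ℝ :=
  if μ = ν then (if (μ : ℕ) = 0 then 1 else -1) else 0

/-- Spacetime partial derivative `∂_μ F x`. -/
def pd {D : ℕ} (F : (Fin D → ℝ) → ℝ) (μ : Fin D) (x : Fin D → ℝ) : ℝ :=
  fderiv ℝ F x (Pi.single μ 1)

/-- Gradient of a field. -/
def grad {D : ℕ} (φ : (Fin D → ℝ) → ℝ) (x : Fin D → ℝ) : Fin D → ℝ :=
  fun ν => pd φ ν x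

/-- Partial derivative of the Lagrangian density in its field argument `u`. -/
def Lu {D : ℕ} (L : (Fin D → ℝ) → ℝ → (Fin D → ℝ) → ℝ)
    (x : Fin D → ℝ) (u : ℝ) (p : Fin D → ℝ) : ℝ :=
  deriv (fun v => L x v p) u

/-- Partial derivative of the Lagrangian density in the μ-th component of `p`. -/
def Lp {D : ℕ} (L : (Fin D → ℝ) → ℝ → (Fin D → ℝ) → ℝ) (μ : Fin D)
    (x : Fin D → ℝ) (u : ℝ) (p : Fin D → ℝ) : ℝ :=
  fderiv ℝ (fun q => L x u q) p (Pi.single μ 1)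

/-!
Write `U = δL/δφ` and `P^μ = δL/δ∂_μφ` along the field, and let `P_ν = g_{να} P^α` for a symmetric
constant matrix `g`. For arbitrary `U` and `P`, the product rule gives
`∂_μ K^μ_ν = (∂_μ P^μ) P_ν + P^μ (∂_μ P_ν - ∂_ν P_μ) - ρ U ∂_ν U`.
If `P_ν = ρ ∂_ν U`, then the covector `P_ν` is curl-free by symmetry of second derivatives, and the
Euler–Lagrange equation `∂_μ P^μ = U` cancels the two remaining terms.
-/

section PartialDerivatives

variable {D : ℕ} {F G : (Fin D → ℝ) → ℝ} {x : Fin D → ℝ}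

lemma pd_add (hF : DifferentiableAt ℝ F x) (hG : DifferentiableAt ℝ G x) (μ : Fin D) :
    pd (fun y => F y + G y) μ x = pd F μ x + pd G μ x := by
  simp [pd, fderiv_fun_add hF hG]

lemma pd_sub (hF : DifferentiableAt ℝ F x) (hG : DifferentiableAt ℝ G x) (μ : Fin D) :
    pd (fun y => F y - G y) μ x = pd F μ x - pd G μ x := by
  simp [pd, fderiv_fun_sub hF hG]

lemma pd_mul (hF : DifferentiableAt ℝ F x) (hG : DifferentiableAt ℝ G x) (μ : Fin D) :
    pd (fun y => F y * G y) μ x = pd F μ x * G x + F x * pd G μ x := by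
  simp only [pd, fderiv_fun_mul hF hG, add_apply, smul_apply, smul_eq_mul]
  ring

lemma pd_const_mul (hF : DifferentiableAt ℝ F x) (c : ℝ) (μ : Fin D) :
    pd (fun y => c * F y) μ x = c * pd F μ x := by
  simp [pd, fderiv_const_mul hF]

lemma pd_sum {ι : Type*} {s : Finset ι} {f : ι → (Fin D → ℝ) → ℝ}
    (hf : ∀ i ∈ s, DifferentiableAt ℝ (f i) x) (μ : Fin D) :
    pd (fun y => ∑ i ∈ s, f i y) μ x = ∑ i ∈ s, pd (f i) μ x := by
  simp [pd, fderiv_fun_sum hf]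

lemma contDiff_pd {n : WithTop ℕ∞} (hF : ContDiff ℝ (n + 1) F) (μ : Fin D) :
    ContDiff ℝ n (pd F μ) :=
  (hF.fderiv_right le_rfl).clm_apply contDiff_const

lemma contDiff_grad {n : WithTop ℕ∞} (hF : ContDiff ℝ (n + 1) F) : ContDiff ℝ n (grad F) :=
  contDiff_pi.2 (contDiff_pd hF)

lemma pd_pd_eq_fderiv_fderiv (hF : DifferentiableAt ℝ (fderiv ℝ F) x) (μ ν : Fin D) :
    pd (pd F ν) μ x = fderiv ℝ (fderiv ℝ F) x (Pi.single μ 1) (Pi.single ν 1) := by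
  have hpd : pd F ν = fun y => fderiv ℝ F y (Pi.single ν 1) := rfl
  simp [hpd, pd, fderiv_clm_apply hF (differentiableAt_const _)]

lemma pd_comm (hF : ContDiff ℝ 2 F) (μ ν : Fin D) (x : Fin D → ℝ) :
    pd (pd F ν) μ x = pd (pd F μ) ν x := by
  have hF' : DifferentiableAt ℝ (fderiv ℝ F) x :=
    (hF.fderiv_right (m := 1) (by norm_num)).differentiable one_ne_zero x
  rw [pd_pd_eq_fderiv_fderiv hF', pd_pd_eq_fderiv_fderiv hF']
  exact hF.contDiffAt.isSymmSndFDerivAt (by simp) _ _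

end PartialDerivatives

section Current

variable {D : ℕ}

/-- The covector field `P_ν = g_{να} P^α` obtained from the vector field `P` by lowering its index
with the constant matrix `g`. -/
def lowerIndex (g : Fin D → Fin D → ℝ) (P : Fin D → (Fin D → ℝ) → ℝ) (ν : Fin D)
    (x : Fin D → ℝ) : ℝ :=
  ∑ α, g ν α * P α x

/-- The current `K^μ_ν = P^μ P_ν - ½ δ^μ_ν (ρ U² + g_{αβ} P^α P^β)` of an arbitrary scalar field `U`
and vector field `P`, which in the application are `δL/δφ` and `δL/δ∂φ`. -/
def quadraticCurrent (g : Fin D → Fin D → ℝ) (ρ : ℝ) (U : (Fin D → ℝ) → ℝ)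
    (P : Fin D → (Fin D → ℝ) → ℝ) (μ ν : Fin D) (x : Fin D → ℝ) : ℝ :=
  P μ x * lowerIndex g P ν x -
    (1/2) * (if μ = ν then ρ * U x ^ 2 + ∑ α, ∑ β, g α β * P α x * P β x else 0)

variable {g : Fin D → Fin D → ℝ} {ρ : ℝ} {U : (Fin D → ℝ) → ℝ} {P : Fin D → (Fin D → ℝ) → ℝ}
  {x : Fin D → ℝ}

lemma differentiableAt_lowerIndex (hP : ∀ μ, DifferentiableAt ℝ (P μ) x) (ν : Fin D) :
    DifferentiableAt ℝ (lowerIndex g P ν) x :=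
  DifferentiableAt.fun_sum fun α _ => (hP α).const_mul (g ν α)

lemma pd_lowerIndex (hP : ∀ μ, DifferentiableAt ℝ (P μ) x) (μ ν : Fin D) :
    pd (lowerIndex g P ν) μ x = ∑ α, g ν α * pd (P α) μ x := by
  unfold lowerIndex
  rw [pd_sum fun α _ => (hP α).const_mul (g ν α)]
  exact Finset.sum_congr rfl fun α _ => pd_const_mul (hP α) _ _

lemma sum_sum_eq_sum_mul_lowerIndex (g : Fin D → Fin D → ℝ) (P : Fin D → (Fin D → ℝ) → ℝ)
    (x : Fin D → ℝ) :
    ∑ α, ∑ β, g α β * P α x * P β x = ∑ α, P α x * lowerIndex g P α x := by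
  simp only [lowerIndex, Finset.mul_sum]
  exact Finset.sum_congr rfl fun α _ => Finset.sum_congr rfl fun β _ => by ring

lemma sum_mul_lowerIndex_comm (hg : ∀ μ ν, g μ ν = g ν μ) (P Q : Fin D → (Fin D → ℝ) → ℝ)
    (x : Fin D → ℝ) :
    ∑ α, Q α x * lowerIndex g P α x = ∑ α, P α x * lowerIndex g Q α x := by
  simp only [lowerIndex, Finset.mul_sum]
  rw [Finset.sum_comm]
  refine Finset.sum_congr rfl fun α _ => Finset.sum_congr rfl fun β _ => ?_
  rw [hg β α]
  ring

lemma differentiableAt_sum_mul_lowerIndex (hP : ∀ μ, DifferentiableAt ℝ (P μ) x) :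
    DifferentiableAt ℝ (fun y => ∑ α, P α y * lowerIndex g P α y) x :=
  DifferentiableAt.fun_sum fun α _ => (hP α).fun_mul (differentiableAt_lowerIndex hP α)

lemma pd_sum_mul_lowerIndex (hg : ∀ μ ν, g μ ν = g ν μ) (hP : ∀ μ, DifferentiableAt ℝ (P μ) x)
    (ν : Fin D) :
    pd (fun y => ∑ α, P α y * lowerIndex g P α y) ν x =
      2 * ∑ α, P α x * pd (lowerIndex g P α) ν x := by
  have hlower := differentiableAt_lowerIndex (g := g) hP
  have hswap : ∑ α, pd (P α) ν x * lowerIndex g P α x =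
      ∑ α, P α x * pd (lowerIndex g P α) ν x := by
    simp only [pd_lowerIndex hP]
    exact sum_mul_lowerIndex_comm hg P (fun α => pd (P α) ν) x
  calc pd (fun y => ∑ α, P α y * lowerIndex g P α y) ν x
      = ∑ α, (pd (P α) ν x * lowerIndex g P α x + P α x * pd (lowerIndex g P α) ν x) := by
        rw [pd_sum fun α _ => (hP α).fun_mul (hlower α)]
        exact Finset.sum_congr rfl fun α _ => pd_mul (hP α) (hlower α) ν
    _ = 2 * ∑ α, P α x * pd (lowerIndex g P α) ν x := by
        rw [Finset.sum_add_distrib, hswap, two_mul]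

lemma pd_quadraticCurrent (hg : ∀ μ ν, g μ ν = g ν μ) (hU : DifferentiableAt ℝ U x)
    (hP : ∀ μ, DifferentiableAt ℝ (P μ) x) (μ ν : Fin D) :
    pd (quadraticCurrent g ρ U P μ ν) μ x =
      pd (P μ) μ x * lowerIndex g P ν x + P μ x * pd (lowerIndex g P ν) μ x -
        if μ = ν then ρ * U x * pd U ν x + ∑ α, P α x * pd (lowerIndex g P α) ν x else 0 := by
  have hlower := differentiableAt_lowerIndex (g := g) hP ν
  unfold quadraticCurrent
  simp only [sum_sum_eq_sum_mul_lowerIndex]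
  split_ifs with hμν
  · subst hμν
    have hUU := hU.fun_mul hU
    have hquad := differentiableAt_sum_mul_lowerIndex (g := g) hP
    simp only [pow_two]
    rw [pd_sub ((hP μ).fun_mul hlower) (((hUU.const_mul ρ).fun_add hquad).const_mul _),
      pd_mul (hP μ) hlower, pd_const_mul ((hUU.const_mul ρ).fun_add hquad),
      pd_add (hUU.const_mul ρ) hquad, pd_const_mul hUU, pd_mul hU hU,
      pd_sum_mul_lowerIndex hg hP]
    ring
  · simp only [mul_zero, sub_zero]
    exact pd_mul (hP μ) hlower μ

lemma sum_pd_quadraticCurrent (hg : ∀ μ ν, g μ ν = g ν μ) (hU : DifferentiableAt ℝ U x)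
    (hP : ∀ μ, DifferentiableAt ℝ (P μ) x) (ν : Fin D) :
    ∑ μ, pd (quadraticCurrent g ρ U P μ ν) μ x =
      (∑ μ, pd (P μ) μ x) * lowerIndex g P ν x +
        ∑ μ, P μ x * (pd (lowerIndex g P ν) μ x - pd (lowerIndex g P μ) ν x) -
        ρ * U x * pd U ν x := by
  simp only [pd_quadraticCurrent hg hU hP, mul_sub, Finset.sum_sub_distrib,
    Finset.sum_add_distrib, ← Finset.sum_mul, Finset.sum_ite_eq', Finset.mem_univ, if_true]
  ring

lemma pd_lowerIndex_comm_of_eq_mul_pd (hU : ContDiff ℝ 2 U)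
    (hprop : ∀ y μ, lowerIndex g P μ y = ρ * pd U μ y) (μ ν : Fin D) (x : Fin D → ℝ) :
    pd (lowerIndex g P ν) μ x = pd (lowerIndex g P μ) ν x := by
  have hpdU (κ : Fin D) : DifferentiableAt ℝ (pd U κ) x :=
    (contDiff_pd (n := 1) (by simpa [one_add_one_eq_two] using hU) κ).differentiable one_ne_zero x
  have hlower (κ : Fin D) : lowerIndex g P κ = fun y => ρ * pd U κ y := funext (hprop · κ)
  rw [hlower, hlower, pd_const_mul (hpdU ν), pd_const_mul (hpdU μ), pd_comm hU]

theorem sum_pd_quadraticCurrent_eq_zero (hg : ∀ μ ν, g μ ν = g ν μ) (hU : ContDiff ℝ 2 U)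
    (hP : ∀ μ, DifferentiableAt ℝ (P μ) x) (hprop : ∀ y μ, lowerIndex g P μ y = ρ * pd U μ y)
    (hdiv : U x = ∑ μ, pd (P μ) μ x) (ν : Fin D) :
    ∑ μ, pd (quadraticCurrent g ρ U P μ ν) μ x = 0 := by
  have hcurl (μ : Fin D) : pd (lowerIndex g P ν) μ x - pd (lowerIndex g P μ) ν x = 0 :=
    sub_eq_zero.2 (pd_lowerIndex_comm_of_eq_mul_pd hU hprop μ ν x)
  rw [sum_pd_quadraticCurrent hg (hU.differentiable two_ne_zero x) hP, ← hdiv, hprop]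
  simp only [hcurl, mul_zero, Finset.sum_const_zero]
  ring

end Current

section Jet

variable {D : ℕ} {L : (Fin D → ℝ) → ℝ → (Fin D → ℝ) → ℝ} {φ : (Fin D → ℝ) → ℝ}

/-- `δL/δφ`: the derivative `L_u` evaluated along the jet of the field `φ`. -/
def jetLu (L : (Fin D → ℝ) → ℝ → (Fin D → ℝ) → ℝ) (φ : (Fin D → ℝ) → ℝ) (x : Fin D → ℝ) : ℝ :=
  Lu L x (φ x) (grad φ x)

/-- `δL/δ∂_μφ`: the derivative `L_{p_μ}` evaluated along the jet of the field `φ`. -/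
def jetLp (L : (Fin D → ℝ) → ℝ → (Fin D → ℝ) → ℝ) (φ : (Fin D → ℝ) → ℝ) (μ : Fin D)
    (x : Fin D → ℝ) : ℝ :=
  Lp L μ x (φ x) (grad φ x)

lemma Lu_eq_fderiv {x p : Fin D → ℝ} {u : ℝ} (hL : DifferentiableAt ℝ ↿L (x, u, p)) :
    Lu L x u p = fderiv ℝ ↿L (x, u, p) (0, 1, 0) := by
  have hincl : HasDerivAt (fun v : ℝ => (x, v, p)) (0, 1, 0) u :=
    (hasDerivAt_const u x).prodMk ((hasDerivAt_id u).prodMk (hasDerivAt_const u p))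
  exact (hL.hasFDerivAt.comp_hasDerivAt u hincl).deriv

lemma Lp_eq_fderiv {x p : Fin D → ℝ} {u : ℝ} (hL : DifferentiableAt ℝ ↿L (x, u, p))
    (μ : Fin D) :
    Lp L μ x u p = fderiv ℝ ↿L (x, u, p) (0, 0, Pi.single μ 1) := by
  have hincl : HasFDerivAt (fun q : Fin D → ℝ => (x, u, q)) _ p :=
    (hasFDerivAt_const (𝕜 := ℝ) x p).prodMk ((hasFDerivAt_const u p).prodMk (hasFDerivAt_id p))
  exact congrArg (· (Pi.single μ 1)) (hL.hasFDerivAt.comp p hincl).fderiv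

variable {n : WithTop ℕ∞}

lemma contDiff_fderiv_jet (hL : ContDiff ℝ (n + 1) ↿L) (hφ : ContDiff ℝ (n + 1) φ) :
    ContDiff ℝ n (fun x => fderiv ℝ ↿L (x, φ x, grad φ x)) :=
  (hL.fderiv_right le_rfl).comp
    (contDiff_id.prodMk ((hφ.of_le le_self_add).prodMk (contDiff_grad hφ)))

lemma contDiff_jetLu (hL : ContDiff ℝ (n + 1) ↿L) (hφ : ContDiff ℝ (n + 1) φ) :
    ContDiff ℝ n (jetLu L φ) := by
  have hjet : jetLu L φ = _ := funext fun x => Lu_eq_fderiv (hL.differentiable (by simp) _)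
  rw [hjet]
  exact (contDiff_fderiv_jet hL hφ).clm_apply contDiff_const

lemma contDiff_jetLp (hL : ContDiff ℝ (n + 1) ↿L) (hφ : ContDiff ℝ (n + 1) φ) (μ : Fin D) :
    ContDiff ℝ n (jetLp L φ μ) := by
  have hjet : jetLp L φ μ = _ := funext fun x => Lp_eq_fderiv (hL.differentiable (by simp) _) μ
  rw [hjet]
  exact (contDiff_fderiv_jet hL hφ).clm_apply contDiff_const

end Jet

lemma eta_symm (D : ℕ) (μ ν : Fin D) : eta D μ ν = eta D ν μ := by
  unfold eta
  grind

theorem proportional_gradient_theories_conserved_current_general {D : ℕ}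
    {g : Fin D → Fin D → ℝ} (hg : ∀ μ ν, g μ ν = g ν μ)
    {L : (Fin D → ℝ) → ℝ → (Fin D → ℝ) → ℝ} (hL : ContDiff ℝ 3 ↿L)
    {ρ : ℝ} {φ : (Fin D → ℝ) → ℝ} (hφ : ContDiff ℝ 3 φ)
    (hprop : ∀ x μ, lowerIndex g (jetLp L φ) μ x = ρ * pd (jetLu L φ) μ x)
    (hEL : ∀ x, jetLu L φ x = ∑ μ, pd (jetLp L φ μ) μ x) (ν : Fin D) (x : Fin D → ℝ) :
    ∑ μ, pd (quadraticCurrent g ρ (jetLu L φ) (jetLp L φ) μ ν) μ x = 0 := by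
  rw [← two_add_one_eq_three] at hL hφ
  have hP (μ : Fin D) : DifferentiableAt ℝ (jetLp L φ μ) x :=
    (contDiff_jetLp hL hφ μ).differentiable two_ne_zero x
  exact sum_pd_quadraticCurrent_eq_zero hg (contDiff_jetLu hL hφ) hP hprop (hEL x) ν

/-- Theorem 3.4: theories with `δL/δ∂_μφ = ρ ∂^μ (δL/δφ)` admit the conserved
current `K^μ_ν`. -/
theorem proportional_gradient_theories_conserved_current {D : ℕ} (hD : 1 ≤ D)
    (L : (Fin D → ℝ) → ℝ → (Fin D → ℝ) → ℝ)
    (hL : ContDiff ℝ (⊤ : ℕ∞) (fun q : (Fin D → ℝ) × ℝ × (Fin D → ℝ) => L q.1 q.2.1 q.2.2))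
    (ρ : ℝ)
    (hcond : ∀ ψ : (Fin D → ℝ) → ℝ, ContDiff ℝ (⊤ : ℕ∞) ψ → ∀ (x : Fin D → ℝ) (μ : Fin D),
      ∑ ν, eta D μ ν * Lp L ν x (ψ x) (grad ψ x) =
        ρ * pd (fun y => Lu L y (ψ y) (grad ψ y)) μ x)
    (φ : (Fin D → ℝ) → ℝ) (hφ : ContDiff ℝ (⊤ : ℕ∞) φ)
    (hEL : ∀ x, Lu L x (φ x) (grad φ x) =
      ∑ μ, pd (fun y => Lp L μ y (φ y) (grad φ y)) μ x) :
    ∀ (ν : Fin D) (x : Fin D → ℝ),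
      ∑ μ, pd (fun y =>
        Lp L μ y (φ y) (grad φ y) * (∑ α, eta D ν α * Lp L α y (φ y) (grad φ y)) -
          (1/2) * (if μ = ν then
            ρ * (Lu L y (φ y) (grad φ y))^2 +
              ∑ α, ∑ β, eta D α β * Lp L α y (φ y) (grad φ y) * Lp L β y (φ y) (grad φ y)
          else 0)) μ x = 0 := by
  exact proportional_gradient_theories_conserved_current_general (eta_symm D)
    (hL.of_le (by norm_cast)) (hφ.of_le (by norm_cast)) (hcond φ hφ) hEL

end
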